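/- Let F be a 2t-repeated k-non-signaling function from ({0,1}^n)^{2t} to ({0,1})^{2t} with k ≥ 7 that is permutation folded and passes both the linearity test and the consistency test with probability at least 1-ε. Then the self-correction F̂ is (1-8ε)-consistent: for any two queries X, Y ∈ ({0,1}^n)^t, Pr[F̂(X)_j = F̂(Y)_j for all j ∈ [t] with X_j = Y_j] ≥ 1-8ε. -/

import Mathlib

noncomputable def prob {α : Type*} (p : PMF α) (E : Set α) : ℝ :=
  (p.toOuterMeasure E).toReal

def restrictAssign {D A : Type*} {S T : Finset D} (h : T ⊆ S)
    (f : {x // x ∈ S} → A) : {x // x ∈ T} → A :=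
  fun x => f ⟨x.1, h x.2⟩

noncomputable def marginal {D A : Type*} {S : Finset D} (p : PMF ({x // x ∈ S} → A))
    {T : Finset D} (h : T ⊆ S) : PMF ({x // x ∈ T} → A) :=
  p.map (restrictAssign h)

def IsNonSignaling {D A : Type*} [DecidableEq D] (k : ℕ)
    (F : (S : Finset D) → PMF ({x // x ∈ S} → A)) : Prop :=
  ∀ S T : Finset D, S.card ≤ k → T.card ≤ k →
    marginal (F S) (Finset.inter_subset_left : S ∩ T ⊆ S) =
    marginal (F T) (Finset.inter_subset_right : S ∩ T ⊆ T)

def permQ {t : ℕ} {β : Type*} (π : Equiv.Perm (Fin t)) (Q : Fin t → β) : Fin t → β :=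
  fun j => Q (π j)

def IsPermFolded {t : ℕ} {D A : Type*} [DecidableEq D] (k : ℕ)
    (F : (S : Finset (Fin t → D)) → PMF ({Q // Q ∈ S} → (Fin t → A))) : Prop :=
  ∀ (ℓ : ℕ) (Q : Fin ℓ → (Fin t → D)) (π : Fin ℓ → Equiv.Perm (Fin t))
    (b : Fin ℓ → (Fin t → A)), ℓ ≤ k →
    prob (F (Finset.image Q Finset.univ))
      {f | ∀ i : Fin ℓ, f ⟨Q i, Finset.mem_image_of_mem _ (Finset.mem_univ i)⟩ = b i} =
    prob (F (Finset.image (fun i => permQ (π i) (Q i)) Finset.univ))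
      {f | ∀ i : Fin ℓ, f ⟨permQ (π i) (Q i),
          Finset.mem_image_of_mem _ (Finset.mem_univ i)⟩ = permQ (π i) (b i)}

/-- A `2t`-repeated non-signaling function over `{0,1}^n`. -/
abbrev NSFam (n t : ℕ) :=
  (S : Finset (Fin t → Fin n → ZMod 2)) → PMF ({Q // Q ∈ S} → (Fin t → ZMod 2))

/-- Acceptance probability of the linearity test: sample uniform `X, Y`, query `F` on
`{X, Y, X+Y}` and check `F(X) + F(Y) = F(X+Y)` in all coordinates. -/
noncomputable def linTestAccept {n t : ℕ} (F : NSFam n t) : ℝ :=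
  prob ((PMF.uniformOfFintype ((Fin t → Fin n → ZMod 2) × (Fin t → Fin n → ZMod 2))).bind
    fun p => (F {p.1, p.2, p.1 + p.2}).map fun f =>
      (f ⟨p.1, by simp⟩, f ⟨p.2, by simp⟩, f ⟨p.1 + p.2, by simp⟩))
    {y | y.1 + y.2.1 = y.2.2}

/-- Acceptance probability of the consistency test on a `2t`-repeated function: sample
uniform `W, Z₁, Z₂`, query `F` on `{[W;Z₁], [W;Z₂]}` and check that the answers agree
on the first `t` coordinates. -/
noncomputable def consTestAccept {n t : ℕ} (F : NSFam n (t + t)) : ℝ :=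
  prob ((PMF.uniformOfFintype ((Fin t → Fin n → ZMod 2) × (Fin t → Fin n → ZMod 2) ×
      (Fin t → Fin n → ZMod 2))).bind
    fun w => (F {Fin.append w.1 w.2.1, Fin.append w.1 w.2.2}).map fun f =>
      (f ⟨Fin.append w.1 w.2.1, by simp⟩, f ⟨Fin.append w.1 w.2.2, by simp⟩))
    {y : (Fin (t + t) → ZMod 2) × (Fin (t + t) → ZMod 2) |
      ∀ j : Fin t, y.1 (Fin.castAdd t j) = y.2 (Fin.castAdd t j)}

/-- The self-correction of a `2t`-repeated non-signaling function: a query `Q` is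
answered by sampling fresh independent uniform `R, W`, querying `F` on
`{[R;W], [Q+R;W]}`, and returning the first `t` coordinates of
`F([R;W]) + F([Q+R;W])`. -/
noncomputable def selfCorrect {n t : ℕ} (F : NSFam n (t + t)) : NSFam n t :=
  fun S =>
    (PMF.uniformOfFintype (({Q // Q ∈ S} → (Fin t → Fin n → ZMod 2)) ×
        ({Q // Q ∈ S} → (Fin t → Fin n → ZMod 2)))).bind fun RW =>
      (F (Finset.univ.biUnion fun Q : {Q // Q ∈ S} =>
          {Fin.append (RW.1 Q) (RW.2 Q), Fin.append (Q.1 + RW.1 Q) (RW.2 Q)})).map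
        fun f Q j =>
          f ⟨Fin.append (RW.1 Q) (RW.2 Q),
              Finset.mem_biUnion.mpr ⟨Q, Finset.mem_univ _, Finset.mem_insert_self _ _⟩⟩
            (Fin.castAdd t j)
          + f ⟨Fin.append (Q.1 + RW.1 Q) (RW.2 Q),
              Finset.mem_biUnion.mpr ⟨Q, Finset.mem_univ _,
                Finset.mem_insert_of_mem (Finset.mem_singleton_self _)⟩⟩
            (Fin.castAdd t j)


namespace SCAux

lemma prob_map {α β : Type*} (p : PMF α) (f : α → β) (E : Set β) :
    prob (p.map f) E = prob p (f ⁻¹' E) := by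
  simp [prob, PMF.toOuterMeasure_map_apply]

lemma outer_le_one {α : Type*} (p : PMF α) (E : Set α) : p.toOuterMeasure E ≤ 1 := by
  rw [PMF.toOuterMeasure_apply]
  calc _ ≤ ∑' x, p x := ENNReal.tsum_le_tsum fun x => Set.indicator_le_self' (by simp) x
    _ = 1 := p.tsum_coe

lemma outer_ne_top {α : Type*} (p : PMF α) (E : Set α) : p.toOuterMeasure E ≠ ⊤ :=
  ne_top_of_le_ne_top ENNReal.one_ne_top (outer_le_one p E)

lemma prob_le_one {α : Type*} (p : PMF α) (E : Set α) : prob p E ≤ 1 := by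
  have := ENNReal.toReal_mono ENNReal.one_ne_top (outer_le_one p E)
  simpa [prob] using this

lemma prob_univ {α : Type*} (p : PMF α) (E : Set α) (h : ∀ x, x ∈ E) : prob p E = 1 := by
  have : E = Set.univ := Set.eq_univ_of_forall h
  subst this
  simp [prob, PMF.toOuterMeasure_apply, p.tsum_coe]

lemma prob_mono {α : Type*} (p : PMF α) {E E' : Set α} (h : E ⊆ E') : prob p E ≤ prob p E' :=
  ENNReal.toReal_mono (outer_ne_top p E') (p.toOuterMeasure.mono h)

lemma prob_inter {α : Type*} (p : PMF α) (E E' : Set α) :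
    prob p E + prob p E' ≤ 1 + prob p (E ∩ E') := by
  have h : p.toOuterMeasure E + p.toOuterMeasure E' ≤ 1 + p.toOuterMeasure (E ∩ E') := by
    rw [PMF.toOuterMeasure_apply, PMF.toOuterMeasure_apply, PMF.toOuterMeasure_apply,
      ← ENNReal.tsum_add, ← p.tsum_coe, ← ENNReal.tsum_add]
    refine ENNReal.tsum_le_tsum fun x => ?_
    by_cases h1 : x ∈ E <;> by_cases h2 : x ∈ E' <;> simp [h1, h2]
  have h' := ENNReal.toReal_mono
    (ENNReal.add_ne_top.2 ⟨ENNReal.one_ne_top, outer_ne_top p _⟩) h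
  rw [ENNReal.toReal_add (outer_ne_top p _) (outer_ne_top p _),
    ENNReal.toReal_add ENNReal.one_ne_top (outer_ne_top p _)] at h'
  simpa [prob] using h'

noncomputable def avg {G : Type*} [Fintype G] (f : G → ℝ) : ℝ := (∑ g, f g) / Fintype.card G

lemma prob_bind {α β : Type*} [Fintype α] [Nonempty α] (f : α → PMF β) (E : Set β) :
    prob ((PMF.uniformOfFintype α).bind f) E = avg fun a => prob (f a) E := by
  unfold prob avg
  rw [PMF.toOuterMeasure_bind_apply, tsum_fintype, ENNReal.toReal_sum]
  · simp [ENNReal.toReal_mul, Finset.mul_sum, div_eq_inv_mul]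
  · intro a _
    exact ENNReal.mul_ne_top (by simp) (outer_ne_top _ _)

lemma avg_hom {G H : Type*} [AddGroup G] [AddGroup H] [Fintype G] [Fintype H]
    (φ : G →+ H) (hφ : Function.Surjective φ) (c : H) (f : H → ℝ) :
    avg (fun g => f (φ g + c)) = avg f := by
  classical
  have hfib : ∀ h : H, (Finset.univ.filter fun g => φ g = h).card =
      (Finset.univ.filter fun g => φ g = 0).card := fun h =>
    AddMonoidHom.card_fiber_eq_of_mem_range φ (hφ h) (hφ 0)
  set m := (Finset.univ.filter fun g => φ g = 0).card with hm
  have hsum : ∀ f : H → ℝ, ∑ g, f (φ g) = m * ∑ h, f h := by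
    intro f
    rw [← Finset.sum_fiberwise (s := Finset.univ) (g := φ), Finset.mul_sum]
    refine Finset.sum_congr rfl fun h _ => ?_
    rw [Finset.sum_congr rfl (g := fun _ => f h)]
    · rw [Finset.sum_const, hfib h, nsmul_eq_mul]
    · intro x hx; rw [(Finset.mem_filter.1 hx).2]
  have hcard : (Fintype.card G : ℝ) = m * Fintype.card H := by
    have := hsum fun _ => 1
    simpa using this
  have hG : (Fintype.card G : ℝ) ≠ 0 := by exact_mod_cast Fintype.card_ne_zero
  have hm0 : (m : ℝ) ≠ 0 := by
    intro h0; rw [hcard, h0] at hG; simp at hG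
  unfold avg
  rw [hsum fun h => f (h + c), hcard, mul_div_mul_left _ _ hm0]
  congr 1
  exact Fintype.sum_equiv (Equiv.addRight c) _ _ fun _ => rfl

lemma avg_mono {G : Type*} [Fintype G] (f g : G → ℝ) (h : ∀ x, f x ≤ g x) : avg f ≤ avg g := by
  unfold avg
  gcongr with x
  exact h x

lemma avg_add {G : Type*} [Fintype G] (f g : G → ℝ) :
    avg (fun x => f x + g x) = avg f + avg g := by
  unfold avg
  rw [Finset.sum_add_distrib, add_div]

lemma avg_const {G : Type*} [Fintype G] [Nonempty G] (c : ℝ) : avg (fun _ : G => c) = c := by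
  unfold avg
  simp

/-- extension of a partial assignment by a default value -/
noncomputable def ext {D A : Type*} [Inhabited A] [DecidableEq D] (S : Finset D)
    (f : {x // x ∈ S} → A) : D → A :=
  fun x => if h : x ∈ S then f ⟨x, h⟩ else default

lemma ext_mem {D A : Type*} [Inhabited A] [DecidableEq D] (S : Finset D)
    (f : {x // x ∈ S} → A) (x : D) (h : x ∈ S) : ext S f x = f ⟨x, h⟩ := by
  simp [ext, h]

noncomputable def tot {D A : Type*} [Inhabited A] [DecidableEq D]
    (F : (S : Finset D) → PMF ({x // x ∈ S} → A)) (S : Finset D) : PMF (D → A) :=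
  (F S).map (ext S)

lemma marg {D A : Type*} [DecidableEq D] {k : ℕ}
    (F : (S : Finset D) → PMF ({x // x ∈ S} → A)) (hns : IsNonSignaling k F)
    {S T : Finset D} (h : T ⊆ S) (hS : S.card ≤ k) :
    (F S).map (restrictAssign h) = F T := by
  have key : ∀ (U : Finset D) (_ : U = T) (h1 : U ⊆ S) (h2 : U ⊆ T),
      marginal (F S) h1 = marginal (F T) h2 → (F S).map (restrictAssign h) = F T := by
    rintro U rfl h1 h2 hh
    have : (restrictAssign h2 : ({x // x ∈ U} → A) → _) = id := rfl
    rw [marginal, marginal, this, PMF.map_id] at hh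
    exact hh
  exact key _ (Finset.inter_eq_right.2 h) _ _
    (hns S T hS ((Finset.card_le_card h).trans hS))

lemma tot_sub {D A : Type*} [Inhabited A] [DecidableEq D] {k : ℕ}
    (F : (S : Finset D) → PMF ({x // x ∈ S} → A)) (hns : IsNonSignaling k F)
    {S T : Finset D} (h : T ⊆ S) (hS : S.card ≤ k) (E : Set (D → A))
    (hE : ∀ g g' : D → A, (∀ x ∈ T, g x = g' x) → (g ∈ E → g' ∈ E)) :
    prob (tot F S) E = prob (tot F T) E := by
  rw [tot, tot, ← marg F hns h hS, PMF.map_comp, prob_map, prob_map]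
  congr 1
  have hx : ∀ f : {x // x ∈ S} → A, ∀ x ∈ T, ext S f x = ext T (restrictAssign h f) x := by
    intro f x hx
    rw [ext_mem _ _ _ hx, ext_mem _ _ _ (h hx)]; rfl
  ext f
  exact ⟨hE _ _ (hx f), hE _ _ fun x hx' => (hx f x hx').symm⟩

lemma tot_fold {t : ℕ} {D A : Type*} [Inhabited A] [DecidableEq D] {k : ℕ} (hk : 2 ≤ k)
    (F : (S : Finset (Fin t → D)) → PMF ({Q // Q ∈ S} → (Fin t → A)))
    (hf : IsPermFolded k F) (π : Equiv.Perm (Fin t)) (Q₁ Q₂ : Fin t → D)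
    (B : Set ((Fin t → A) × (Fin t → A))) :
    prob (tot F {Q₁, Q₂}) {g | (permQ π (g Q₁), permQ π (g Q₂)) ∈ B} =
    prob (tot F {permQ π Q₁, permQ π Q₂}) {g | (g (permQ π Q₁), g (permQ π Q₂)) ∈ B} := by
  have key : (tot F {Q₁, Q₂}).map (fun g => (permQ π (g Q₁), permQ π (g Q₂))) =
      (tot F {permQ π Q₁, permQ π Q₂}).map (fun g => (g (permQ π Q₁), g (permQ π Q₂))) := by
    ext ⟨b₁, b₂⟩
    have h := hf 2 ![Q₁, Q₂] (fun _ => π) ![permQ π.symm b₁, permQ π.symm b₂] hk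
    have s1 : Finset.image ![Q₁, Q₂] Finset.univ = {Q₁, Q₂} := by
      ext x; simp [Fin.exists_fin_two, eq_comm]
    have s2 : Finset.image (fun i => permQ π (![Q₁, Q₂] i)) Finset.univ =
        {permQ π Q₁, permQ π Q₂} := by
      ext x; simp [Fin.exists_fin_two, eq_comm]
    have e1 : prob (F (Finset.image ![Q₁, Q₂] Finset.univ))
      {f | ∀ i : Fin 2, f ⟨![Q₁, Q₂] i, Finset.mem_image_of_mem _ (Finset.mem_univ i)⟩ =
        ![permQ π.symm b₁, permQ π.symm b₂] i} = prob (tot F (Finset.image ![Q₁, Q₂] Finset.univ))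
        {g | (permQ π (g Q₁), permQ π (g Q₂)) = (b₁, b₂)} := by
      rw [tot, prob_map]
      congr 1
      ext f
      have m1 : Q₁ ∈ Finset.image ![Q₁, Q₂] Finset.univ := by simp [s1]
      have m2 : Q₂ ∈ Finset.image ![Q₁, Q₂] Finset.univ := by simp [s1]
      have hp : ∀ a b : Fin t → A, a = permQ π.symm b ↔ permQ π a = b := by
        intro a b
        constructor
        · rintro rfl; ext j; simp [permQ]
        · rintro rfl; ext j; simp [permQ]
      simp [Fin.forall_fin_two, ext_mem _ _ _ m1, ext_mem _ _ _ m2, hp]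
    have e2 : prob (F (Finset.image (fun i => permQ π (![Q₁, Q₂] i)) Finset.univ))
      {f | ∀ i : Fin 2, f ⟨permQ π (![Q₁, Q₂] i),
          Finset.mem_image_of_mem _ (Finset.mem_univ i)⟩ =
        permQ π (![permQ π.symm b₁, permQ π.symm b₂] i)} =
        prob (tot F (Finset.image (fun i => permQ π (![Q₁, Q₂] i)) Finset.univ))
        {g | (g (permQ π Q₁), g (permQ π Q₂)) = (b₁, b₂)} := by
      rw [tot, prob_map]
      congr 1
      ext f
      have m1 : permQ π Q₁ ∈ Finset.image (fun i => permQ π (![Q₁, Q₂] i)) Finset.univ := by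
        simp [s2]
      have m2 : permQ π Q₂ ∈ Finset.image (fun i => permQ π (![Q₁, Q₂] i)) Finset.univ := by
        simp [s2]
      have hp : ∀ b : Fin t → A, permQ π (permQ π.symm b) = b := by
        intro b; ext j; simp [permQ]
      simp [Fin.forall_fin_two, ext_mem _ _ _ m1, ext_mem _ _ _ m2, hp]
    rw [e1, e2, s1, s2] at h
    rw [prob, prob, ENNReal.toReal_eq_toReal_iff' (outer_ne_top _ _) (outer_ne_top _ _)] at h
    rw [← PMF.toOuterMeasure_apply_singleton, ← PMF.toOuterMeasure_apply_singleton,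
      PMF.toOuterMeasure_map_apply, PMF.toOuterMeasure_map_apply]
    exact h
  have := congrArg (fun p => prob p B) key
  simp only [prob_map] at this
  exact this

abbrev Vec (n t : ℕ) := Fin t → Fin n → ZMod 2

noncomputable def linP {n t : ℕ} (F : NSFam n t) (a b : Vec n t) : ℝ :=
  prob (tot F {a, b, a + b}) {g | g a + g b = g (a + b)}

noncomputable def consP {n t : ℕ} (F : NSFam n (t + t)) (w z₁ z₂ : Vec n t) : ℝ :=
  prob (tot F {Fin.append w z₁, Fin.append w z₂})
    {g | ∀ j : Fin t, g (Fin.append w z₁) (Fin.castAdd t j) =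
      g (Fin.append w z₂) (Fin.castAdd t j)}

lemma lin_eq {n t : ℕ} (F : NSFam n t) :
    linTestAccept F = avg fun p : Vec n t × Vec n t => linP F p.1 p.2 := by
  rw [linTestAccept, prob_bind]
  congr 1
  funext p
  rw [linP, tot, prob_map, prob_map]
  congr 1
  ext f
  simp [ext]

lemma cons_eq {n t : ℕ} (F : NSFam n (t + t)) :
    consTestAccept F = avg fun p : Vec n t × Vec n t × Vec n t => consP F p.1 p.2.1 p.2.2 := by
  rw [consTestAccept, prob_bind]
  congr 1
  funext p
  rw [consP, tot, prob_map, prob_map]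
  congr 1
  ext f
  simp [ext]

/-- first half -/
def fh {t : ℕ} {β : Type*} (a : Fin (t + t) → β) : Fin t → β := fun j => a (Fin.castAdd t j)
/-- second half -/
def sh {t : ℕ} {β : Type*} (a : Fin (t + t) → β) : Fin t → β := fun j => a (Fin.natAdd t j)

lemma fh_append {t : ℕ} {β : Type*} (a b : Fin t → β) : fh (Fin.append a b) = a := by
  ext j; simp [fh]
lemma sh_append {t : ℕ} {β : Type*} (a b : Fin t → β) : sh (Fin.append a b) = b := by
  ext j; simp [sh, -Fin.natAdd_eq_addNat]
lemma append_fh_sh {t : ℕ} {β : Type*} (a : Fin (t + t) → β) : Fin.append (fh a) (sh a) = a := by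
  ext j; refine Fin.addCases (fun i => ?_) (fun i => ?_) j <;> simp [fh, sh, -Fin.natAdd_eq_addNat]
lemma append_add {t : ℕ} {β : Type*} [Add β] (a b c d : Fin t → β) :
    Fin.append (a + b) (c + d) = Fin.append a c + Fin.append b d := by
  ext j; refine Fin.addCases (fun i => ?_) (fun i => ?_) j <;> simp [-Fin.natAdd_eq_addNat]

/-- The permutation swapping `j` and `t + j` for `j` outside the set `P`. -/
def swp {t : ℕ} (P : Fin t → Prop) [DecidablePred P] : Equiv.Perm (Fin (t + t)) :=
  Function.Involutive.toPerm
    (fun i => Fin.addCases (fun j => if P j then Fin.castAdd t j else Fin.natAdd t j)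
      (fun j => if P j then Fin.natAdd t j else Fin.castAdd t j) i) (by
    intro i
    refine Fin.addCases (fun j => ?_) (fun j => ?_) i <;> by_cases h : P j <;> simp [h, -Fin.natAdd_eq_addNat])

lemma swp_cast {t : ℕ} (P : Fin t → Prop) [DecidablePred P] (j : Fin t) :
    swp P (Fin.castAdd t j) = if P j then Fin.castAdd t j else Fin.natAdd t j := by
  change Fin.addCases (motive := fun _ => Fin (t + t))
    (fun j => if P j then Fin.castAdd t j else Fin.natAdd t j)
    (fun j => if P j then Fin.natAdd t j else Fin.castAdd t j) (Fin.castAdd t j) = _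
  rw [Fin.addCases_left]

/-- The consistency test moved by a permutation. -/
lemma consP_perm {n t k : ℕ} (hk : 2 ≤ k) (F : NSFam n (t + t)) (hf : IsPermFolded k F)
    (π : Equiv.Perm (Fin (t + t))) (w z₁ z₂ : Vec n t) (Q₁ Q₂ : Vec n (t + t))
    (h₁ : permQ π Q₁ = Fin.append w z₁) (h₂ : permQ π Q₂ = Fin.append w z₂) :
    prob (tot F {Q₁, Q₂}) {g | ∀ j : Fin t, g Q₁ (π (Fin.castAdd t j)) =
      g Q₂ (π (Fin.castAdd t j))} = consP F w z₁ z₂ := by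
  have := tot_fold hk F hf π Q₁ Q₂
    {y | ∀ j : Fin t, y.1 (Fin.castAdd t j) = y.2 (Fin.castAdd t j)}
  rw [h₁, h₂] at this
  exact this

lemma perm_lift {t : ℕ} {β : Type*} (π : Equiv.Perm (Fin t)) (b : Fin t → β) :
    permQ π (permQ π.symm b) = b := by
  ext j; simp [permQ]

/-- Pointwise bound for fixed randomness. -/
lemma pointwise {n t k : ℕ} (hk : 7 ≤ k) (F : NSFam n (t + t)) (hns : IsNonSignaling k F)
    (hf : IsPermFolded k F) (X Y : Vec n t) (A B C D : Vec n (t + t)) (v : Vec n t)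
    (π : Equiv.Perm (Fin (t + t)))
    (hπ : ∀ j, X j = Y j → π (Fin.castAdd t j) = Fin.castAdd t j)
    (hAB : fh (permQ π (B + D)) = fh (permQ π (A + C))) (S : Finset (Vec n (t + t)))
    (hS : S = {A, B, C, D}) :
    linP F A C + linP F B D
      + consP F (fh (permQ π (A + C))) (sh (permQ π (A + C))) v
      + consP F (fh (permQ π (A + C))) (sh (permQ π (B + D))) v ≤
    3 + prob (tot F S) {g | ∀ j, X j = Y j → g A (Fin.castAdd t j) + g B (Fin.castAdd t j) =
      g C (Fin.castAdd t j) + g D (Fin.castAdd t j)} := by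
  subst hS
  set w := fh (permQ π (A + C)) with hw
  set G := permQ π.symm (Fin.append w v) with hG
  have hG' : permQ π G = Fin.append w v := perm_lift _ _
  rw [← consP_perm (by omega) F hf π w _ v (A + C) G (append_fh_sh _).symm hG',
    ← consP_perm (by omega) F hf π w _ v (B + D) G
      (by rw [← hAB]; exact (append_fh_sh _).symm) hG']
  set U : Finset (Vec n (t + t)) := {A, B, C, D, A + C, B + D, G} with hU
  have hUc : U.card ≤ k := 
    ((Finset.card_insert_le _ _).trans (Nat.succ_le_succ Finset.card_le_six)).trans hk
  rw [linP, linP,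
    ← tot_sub F hns (S := U) (T := {A, C, A + C}) (by intro x; simp [hU]; tauto) hUc,
    ← tot_sub F hns (S := U) (T := {B, D, B + D}) (by intro x; simp [hU]; tauto) hUc,
    ← tot_sub F hns (S := U) (T := {A + C, G}) (by intro x; simp [hU]; tauto) hUc,
    ← tot_sub F hns (S := U) (T := {B + D, G}) (by intro x; simp [hU]; tauto) hUc,
    ← tot_sub F hns (S := U) (T := {A, B, C, D}) (by intro x; simp [hU]; tauto) hUc]
  · set E1 : Set (Vec n (t + t) → Fin (t + t) → ZMod 2) := {g | g A + g C = g (A + C)} with hE1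
    set E2 : Set (Vec n (t + t) → Fin (t + t) → ZMod 2) := {g | g B + g D = g (B + D)} with hE2
    set E3 : Set (Vec n (t + t) → Fin (t + t) → ZMod 2) :=
      {g | ∀ j : Fin t, g (A + C) (π (Fin.castAdd t j)) = g G (π (Fin.castAdd t j))} with hE3
    set E4 : Set (Vec n (t + t) → Fin (t + t) → ZMod 2) :=
      {g | ∀ j : Fin t, g (B + D) (π (Fin.castAdd t j)) = g G (π (Fin.castAdd t j))} with hE4
    have i1 := prob_inter (tot F U) E1 E2
    have i2 := prob_inter (tot F U) (E1 ∩ E2) E3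
    have i3 := prob_inter (tot F U) (E1 ∩ E2 ∩ E3) E4
    have i4 : E1 ∩ E2 ∩ E3 ∩ E4 ⊆ {g | ∀ j, X j = Y j →
        g A (Fin.castAdd t j) + g B (Fin.castAdd t j) =
        g C (Fin.castAdd t j) + g D (Fin.castAdd t j)} := by
      rintro g ⟨⟨⟨h1, h2⟩, h3⟩, h4⟩ j hj
      have h3 := h3 j
      have h4 := h4 j
      rw [hπ j hj] at h3 h4
      have h1 := congrFun h1 (Fin.castAdd t j)
      have h2 := congrFun h2 (Fin.castAdd t j)
      simp only [Pi.add_apply] at h1 h2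
      have e := h1.trans (h3.trans (h4.symm.trans h2.symm))
      generalize g A (Fin.castAdd t j) = a at *
      generalize g B (Fin.castAdd t j) = b at *
      generalize g C (Fin.castAdd t j) = c at *
      generalize g D (Fin.castAdd t j) = d at *
      clear * - e
      revert a b c d
      decide
    have i5 := prob_mono (tot F U) i4
    linarith
  all_goals
    intro g g' h hg
    simp only [Finset.mem_insert, Finset.mem_singleton, forall_eq_or_imp, forall_eq] at h
    simp only [Set.mem_ofPred_eq] at hg ⊢
    simpa only [h] using hg

abbrev Idx {n t : ℕ} (X Y : Vec n t) := {Q // Q ∈ ({X, Y} : Finset (Vec n t))}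

abbrev Om {n t : ℕ} (X Y : Vec n t) :=
  ((Idx X Y → Vec n t) × (Idx X Y → Vec n t)) × Vec n t

noncomputable instance {n t : ℕ} (X Y : Vec n t) : Fintype (Om X Y) :=
  letI : Fintype ((Idx X Y → Vec n t) × (Idx X Y → Vec n t)) := inferInstance
  letI : Fintype (Vec n t) := inferInstance
  instFintypeProd _ _

lemma selfCorrect_ne {n t : ℕ} (F : NSFam n (t + t)) (X Y : Vec n t)
    (iX iY : {Q // Q ∈ ({X, Y} : Finset (Vec n t))}) (hX : iX.1 = X) (hY : iY.1 = Y) :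
    prob (selfCorrect F {X, Y}) {f | ∀ j : Fin t, X j = Y j → f iX j = f iY j} =
    avg fun RW : ({Q // Q ∈ ({X, Y} : Finset (Vec n t))} → Vec n t) ×
        ({Q // Q ∈ ({X, Y} : Finset (Vec n t))} → Vec n t) =>
      prob (tot F {Fin.append (RW.1 iX) (RW.2 iX), Fin.append (X + RW.1 iX) (RW.2 iX),
        Fin.append (RW.1 iY) (RW.2 iY), Fin.append (Y + RW.1 iY) (RW.2 iY)})
        {g | ∀ j, X j = Y j → g (Fin.append (RW.1 iX) (RW.2 iX)) (Fin.castAdd t j) +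
            g (Fin.append (X + RW.1 iX) (RW.2 iX)) (Fin.castAdd t j) =
          g (Fin.append (RW.1 iY) (RW.2 iY)) (Fin.castAdd t j) +
            g (Fin.append (Y + RW.1 iY) (RW.2 iY)) (Fin.castAdd t j)} := by
  rw [selfCorrect, prob_bind]
  congr 1
  funext RW
  have hs : ({Fin.append (RW.1 iX) (RW.2 iX), Fin.append (X + RW.1 iX) (RW.2 iX),
        Fin.append (RW.1 iY) (RW.2 iY), Fin.append (Y + RW.1 iY) (RW.2 iY)} :
          Finset (Vec n (t + t))) =
      (Finset.univ.biUnion fun Q : {Q // Q ∈ ({X, Y} : Finset (Vec n t))} =>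
          {Fin.append (RW.1 Q) (RW.2 Q), Fin.append (Q.1 + RW.1 Q) (RW.2 Q)}) := by
    obtain ⟨x, hx⟩ := iX
    obtain ⟨y, hy⟩ := iY
    dsimp only at hX hY
    subst hX hY
    ext z
    simp only [Finset.mem_insert, Finset.mem_singleton, Finset.mem_biUnion, Finset.mem_univ,
      true_and]
    constructor
    · rintro (h | h | h | h)
      · exact ⟨⟨x, hx⟩, Or.inl h⟩
      · exact ⟨⟨x, hx⟩, Or.inr h⟩
      · exact ⟨⟨y, hy⟩, Or.inl h⟩
      · exact ⟨⟨y, hy⟩, Or.inr h⟩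
    · rintro ⟨⟨q, hq⟩, h⟩
      have hq' := hq
      simp only [Finset.mem_insert, Finset.mem_singleton] at hq'
      rcases hq' with rfl | rfl
      · tauto
      · tauto
  rw [hs, tot, prob_map, prob_map]
  congr 1
  ext f
  simp only [Set.mem_preimage, Set.mem_ofPred_eq]
  refine forall_congr' fun j => imp_congr_right fun _ => ?_
  rw [ext_mem _ f _ (by rw [← hs]; simp), ext_mem _ f _ (by rw [← hs]; simp),
    ext_mem _ f _ (by rw [← hs]; simp), ext_mem _ f _ (by rw [← hs]; simp)]
  simp only [hX, hY]

end SCAux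

/-- if a permutation-folded `2t`-repeated `k`-non-signaling function
(`k ≥ 7`) passes both the linearity and consistency tests with probability at least
`1-ε`, then its self-correction is `(1-8ε)`-consistent: for any queries `X, Y`, with
probability at least `1-8ε` the answers agree on all coordinates where `X` and `Y`
agree. -/
theorem selfCorrect_consistent {n t k : ℕ} (ε : ℝ) (F : NSFam n (t + t))
    (hns : IsNonSignaling k F) (hk : 7 ≤ k)
    (hfold : IsPermFolded k F)
    (hlin : linTestAccept F ≥ 1 - ε)
    (hcons : consTestAccept F ≥ 1 - ε) :
    ∀ X Y : Fin t → Fin n → ZMod 2,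
      prob (selfCorrect F {X, Y})
        {f | ∀ j : Fin t, X j = Y j → f ⟨X, by simp⟩ j = f ⟨Y, by simp⟩ j}
        ≥ 1 - 8 * ε := by
  intro X Y
  have hε : 0 ≤ ε := by
    have : linTestAccept F ≤ 1 := SCAux.prob_le_one _ _
    linarith
  by_cases hXY : X = Y
  · subst hXY
    rw [SCAux.prob_univ _ _ (by intro f j _; rfl)]
    linarith
  rw [SCAux.lin_eq] at hlin
  rw [SCAux.cons_eq] at hcons
  rw [SCAux.selfCorrect_ne F X Y _ _ rfl rfl]
  set iX : {Q // Q ∈ ({X, Y} : Finset (SCAux.Vec n t))} := ⟨X, by simp⟩ with hiX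
  set iY : {Q // Q ∈ ({X, Y} : Finset (SCAux.Vec n t))} := ⟨Y, by simp⟩ with hiY
  have hi : iY ≠ iX := by
    intro h
    exact hXY (congrArg Subtype.val h).symm
  let π := SCAux.swp (fun j => X j = Y j)
  -- the homomorphism giving the two uniform queries
  let φ : SCAux.Om X Y →+ SCAux.Vec n (t + t) × SCAux.Vec n (t + t) :=
    { toFun := fun ω => (Fin.append (ω.1.1 iX) (ω.1.2 iX), Fin.append (ω.1.1 iY) (ω.1.2 iY))
      map_zero' := by
        ext i <;> refine Fin.addCases (fun i => ?_) (fun i => ?_) i <;> simp [-Fin.natAdd_eq_addNat]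
      map_add' := fun a b => by
        simp only [Prod.fst_add, Prod.snd_add, Pi.add_apply, SCAux.append_add, Prod.mk_add_mk] }
  have hφ : ∀ a c v, ∃ ω, φ ω = (a, c) ∧ ω.2 = v := by
    intro a c v
    refine ⟨((fun i => if i = iX then SCAux.fh a else SCAux.fh c,
      fun i => if i = iX then SCAux.sh a else SCAux.sh c), v), ?_, rfl⟩
    simp [φ, hi, SCAux.append_fh_sh]
  have hφs : Function.Surjective φ := by
    rintro ⟨a, c⟩
    obtain ⟨ω, h, _⟩ := hφ a c 0
    exact ⟨ω, h⟩
  let ψ : SCAux.Om X Y →+ SCAux.Vec n t × SCAux.Vec n t × SCAux.Vec n t :=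
    { toFun := fun ω => (SCAux.fh (permQ π ((φ ω).1 + (φ ω).2)),
        SCAux.sh (permQ π ((φ ω).1 + (φ ω).2)), ω.2)
      map_zero' := by
        rw [map_zero]; rfl
      map_add' := fun a b => by
        rw [map_add]
        refine Prod.ext ?_ (Prod.ext ?_ rfl)
        · funext j
          simp only [SCAux.fh, permQ, Prod.fst_add, Prod.snd_add, Pi.add_apply]
          abel
        · funext j
          simp only [SCAux.sh, permQ, Prod.fst_add, Prod.snd_add, Pi.add_apply]
          abel }
  have hψs : Function.Surjective ψ := by
    rintro ⟨w, z, v⟩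
    obtain ⟨ω, h, hv⟩ := hφ (permQ π.symm (Fin.append w z)) 0 v
    refine ⟨ω, ?_⟩
    change (SCAux.fh (permQ π ((φ ω).1 + (φ ω).2)),
        SCAux.sh (permQ π ((φ ω).1 + (φ ω).2)), ω.2) = _
    rw [h, hv]
    simp only [add_zero, SCAux.perm_lift, SCAux.fh_append, SCAux.sh_append]
  let pX : SCAux.Vec n (t + t) := Fin.append X 0
  let pY : SCAux.Vec n (t + t) := Fin.append Y 0
  have a1 := SCAux.avg_hom φ hφs 0 (fun p => SCAux.linP F p.1 p.2)
  have a2 := SCAux.avg_hom φ hφs (pX, pY) (fun p => SCAux.linP F p.1 p.2)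
  have a3 := SCAux.avg_hom ψ hψs 0 (fun p => SCAux.consP F p.1 p.2.1 p.2.2)
  have a4 := SCAux.avg_hom ψ hψs (0, SCAux.sh (permQ π (pX + pY)), 0)
    (fun p => SCAux.consP F p.1 p.2.1 p.2.2)
  have a5 := fun f => SCAux.avg_hom
    (AddMonoidHom.fst ((SCAux.Idx X Y → SCAux.Vec n t) × (SCAux.Idx X Y → SCAux.Vec n t)) (SCAux.Vec n t))
    Prod.fst_surjective 0 f
  rw [← a5]
  have hpt := fun ω : SCAux.Om X Y => SCAux.pointwise hk F hns hfold X Y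
    (φ ω).1 ((φ ω).1 + pX) (φ ω).2 ((φ ω).2 + pY) ω.2 π
    (by intro j hj; simp [π, SCAux.swp_cast, hj])
    (by
      funext j
      have h2 : ∀ x : Fin n → ZMod 2, x + x = 0 := fun x => by
        ext i; exact CharTwo.add_self_eq_zero _
      by_cases hj : X j = Y j
      · simp only [SCAux.fh, permQ, π, SCAux.swp_cast, hj, if_true, Pi.add_apply, pX, pY,
          Fin.append_left]
        rw [add_add_add_comm, h2, add_zero]
      · simp only [SCAux.fh, permQ, π, SCAux.swp_cast, hj, if_false, Pi.add_apply, pX, pY,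
          Fin.append_right, Pi.zero_apply, add_zero]) _ rfl
  have hav := SCAux.avg_mono _ _ hpt
  rw [SCAux.avg_add, SCAux.avg_add, SCAux.avg_add, SCAux.avg_add, SCAux.avg_const] at hav
  have b1 : (SCAux.avg fun ω : SCAux.Om X Y => SCAux.linP F (φ ω).1 (φ ω).2) ≥ 1 - ε := by
    simp only [add_zero] at a1
    rw [a1]; exact hlin
  have b2 : (SCAux.avg fun ω : SCAux.Om X Y => SCAux.linP F ((φ ω).1 + pX) ((φ ω).2 + pY)) ≥ 1 - ε := by
    rw [← a2] at hlin; exact hlin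
  have b3 : (SCAux.avg fun ω : SCAux.Om X Y => SCAux.consP F (SCAux.fh (permQ π ((φ ω).1 + (φ ω).2)))
      (SCAux.sh (permQ π ((φ ω).1 + (φ ω).2))) ω.2) ≥ 1 - ε := by
    simp only [add_zero] at a3
    rw [← a3] at hcons; exact hcons
  have b4 : (SCAux.avg fun ω : SCAux.Om X Y => SCAux.consP F (SCAux.fh (permQ π ((φ ω).1 + (φ ω).2)))
      (SCAux.sh (permQ π ((φ ω).1 + pX + ((φ ω).2 + pY)))) ω.2) ≥ 1 - ε := by
    rw [← a4] at hcons
    refine le_of_le_of_eq (ge_iff_le.1 hcons) ?_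
    congr 1
    funext ω
    have e : ψ ω + (0, SCAux.sh (permQ π (pX + pY)), 0) =
        (SCAux.fh (permQ π ((φ ω).1 + (φ ω).2)),
          SCAux.sh (permQ π ((φ ω).1 + pX + ((φ ω).2 + pY))), ω.2) := by
      refine Prod.ext (add_zero _) (Prod.ext ?_ (add_zero _))
      rw [add_add_add_comm]
      rfl
    rw [e]
  have hfin : (SCAux.avg fun ω : SCAux.Om X Y => prob (SCAux.tot F
      {(φ ω).1, (φ ω).1 + pX, (φ ω).2, (φ ω).2 + pY})
      {g | ∀ j, X j = Y j → g (φ ω).1 (Fin.castAdd t j) + g ((φ ω).1 + pX) (Fin.castAdd t j) =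
      g (φ ω).2 (Fin.castAdd t j) + g ((φ ω).2 + pY) (Fin.castAdd t j)}) ≥ 1 - 8 * ε := by
    linarith
  refine le_of_le_of_eq (ge_iff_le.1 hfin) ?_
  congr 1
  funext ω
  have c1 : (φ ω).1 + pX = Fin.append (X + ω.1.1 iX) (ω.1.2 iX) := by
    rw [add_comm X, ← add_zero (ω.1.2 iX), SCAux.append_add]; rfl
  have c2 : (φ ω).2 + pY = Fin.append (Y + ω.1.1 iY) (ω.1.2 iY) := by
    rw [add_comm Y, ← add_zero (ω.1.2 iY), SCAux.append_add]; rfl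
  rw [c1, c2]
  simp only [add_zero]
  rfl
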